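/- For every integer n ≥ 1 one has (1/n)·Σ_{t=2}^{n−1} (n/t)²·( (1 − t/n)^{−1/2} − 1 ) ≤ 3·ln(e·n), where the sum is over integers t with 2 ≤ t ≤ n−1 (and is empty, hence zero, if n ≤ 2). -/

import Mathlib

/-!
With `x = t / n`, the summand is `x⁻¹ ^ 2 * ((1 - x) ^ (-1 / 2) - 1)`. Setting `y = √(1 - x)` and
cancelling the factor `1 - y`, one sees that it is at most `x⁻¹ + y⁻¹`: the first term carries the
singularity at `x = 0` and the second the one at `x = 1`. The Riemann sum of `x⁻¹` is a partial
harmonic sum, at most `log n`, and that of `(√(1 - x))⁻¹` is at most its integral `2`. This proves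
the bound `log n + 2`.
-/

open Finset

lemma rpow_neg_one_div_two {x : ℝ} (hx : 0 ≤ x) : x ^ (-(1 : ℝ) / 2) = (√x)⁻¹ := by
  rw [neg_div, Real.rpow_neg hx, Real.sqrt_eq_rpow]

lemma inv_sq_mul_inv_sqrt_sub_one_le {x : ℝ} (hx₀ : 0 < x) (hx₁ : x < 1) :
    x⁻¹ ^ 2 * ((√(1 - x))⁻¹ - 1) ≤ x⁻¹ + (√(1 - x))⁻¹ := by
  obtain ⟨y, hy⟩ : ∃ y, y = √(1 - x) := ⟨_, rfl⟩
  have hy₀ : 0 < y := hy ▸ Real.sqrt_pos.2 (sub_pos.2 hx₁)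
  have hxy : x = (1 - y) * (1 + y) := by
    linarith [hy ▸ Real.sq_sqrt (sub_nonneg.2 hx₁.le)]
  have hy₁ : 0 < 1 - y := pos_of_mul_pos_left (hxy ▸ hx₀) (by positivity)
  have cancelled : 1 / (1 + y) ≤ y + x := by
    rw [div_le_iff₀ (by positivity), hxy]
    have : 0 < y + y * ((1 - y) * (1 + y)) := by positivity
    linarith
  rw [← hy]
  calc x⁻¹ ^ 2 * (y⁻¹ - 1) = (1 / (1 + y)) / (x * y) := by
        rw [hxy]
        field_simp
    _ ≤ (y + x) / (x * y) := by gcongr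
    _ = x⁻¹ + y⁻¹ := by field_simp

lemma div_sq_mul_rpow_sub_one_le {n t : ℝ} (ht : 0 < t) (htn : t < n) :
    (n / t) ^ 2 * ((1 - t / n) ^ (-(1 : ℝ) / 2) - 1) ≤ n / t + (√(1 - t / n))⁻¹ := by
  have hn : 0 < n := ht.trans htn
  have hx : t / n < 1 := (div_lt_one hn).2 htn
  rw [rpow_neg_one_div_two (sub_nonneg.2 hx.le), ← inv_div t n]
  exact inv_sq_mul_inv_sqrt_sub_one_le (div_pos ht hn) hx

lemma sum_Ioc_inv_le_log_div {a b : ℕ} (ha : 0 < a) (hab : a ≤ b) :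
    ∑ i ∈ Ioc a b, (i : ℝ)⁻¹ ≤ Real.log (b / a) := by
  have ha' : (0 : ℝ) < a := by exact_mod_cast ha
  have hb' : (0 : ℝ) < b := by exact_mod_cast ha.trans_le hab
  rw [← integral_inv_of_pos ha' hb', ← Ico_add_one_add_one_eq_Ioc,
    ← sum_Ico_add' (fun i : ℕ ↦ (i : ℝ)⁻¹)]
  exact (inv_antitoneOn_Icc_right ha').sum_le_integral_Ico hab

lemma inv_sqrt_add_one_le {x : ℝ} (hx : 0 ≤ x) : (√(x + 1))⁻¹ ≤ 2 * (√(x + 1) - √x) := by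
  have hpos : 0 < √(x + 1) := Real.sqrt_pos.2 (by positivity)
  rw [inv_le_iff_one_le_mul₀ hpos]
  nlinarith [sq_nonneg (√(x + 1) - √x), Real.sq_sqrt hx, Real.sq_sqrt (add_nonneg hx zero_le_one)]

lemma sum_range_inv_sqrt_add_one_le (n : ℕ) :
    ∑ i ∈ range n, (√((i : ℝ) + 1))⁻¹ ≤ 2 * √n := by
  induction n with
  | zero => simp
  | succ n ih =>
    rw [sum_range_succ, Nat.cast_add_one]
    linarith [inv_sqrt_add_one_le n.cast_nonneg]

lemma sum_range_inv_sqrt_one_sub_div_le (n : ℕ) :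
    ∑ i ∈ range n, (√(1 - (i : ℝ) / n))⁻¹ ≤ 2 * n := by
  have reflected : ∀ i ∈ range n,
      (√(1 - ((n - 1 - i : ℕ) : ℝ) / n))⁻¹ = √n * (√((i : ℝ) + 1))⁻¹ := by
    intro i hi
    have hin : i < n := mem_range.1 hi
    have hn : (0 : ℝ) < n := by exact_mod_cast i.zero_le.trans_lt hin
    have hcast : ((n - 1 - i : ℕ) : ℝ) = n - (i + 1) := by
      rw [Nat.sub_sub, add_comm 1 i, Nat.cast_sub hin, Nat.cast_add_one]
    rw [hcast, sub_div, div_self hn.ne', sub_sub_cancel, Real.sqrt_div (by positivity), inv_div,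
      div_eq_mul_inv]
  rw [← sum_range_reflect, sum_congr rfl reflected, ← mul_sum]
  calc √n * ∑ i ∈ range n, (√((i : ℝ) + 1))⁻¹ ≤ √n * (2 * √n) := by
        gcongr
        exact sum_range_inv_sqrt_add_one_le n
    _ = 2 * n := by rw [mul_left_comm, Real.mul_self_sqrt n.cast_nonneg]

lemma one_div_mul_sum_Ico_le_log_add_two {n : ℕ} (hn : 1 ≤ n) :
    1 / (n : ℝ) * ∑ t ∈ Ico 2 n,
        ((n : ℝ) / t) ^ 2 * ((1 - (t : ℝ) / n) ^ (-(1 : ℝ) / 2) - 1)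
      ≤ Real.log n + 2 := by
  have hn₀ : (0 : ℝ) < n := by exact_mod_cast hn
  have sum_inv : ∑ t ∈ Ico 2 n, (t : ℝ)⁻¹ ≤ Real.log n := by
    calc ∑ t ∈ Ico 2 n, (t : ℝ)⁻¹ ≤ ∑ t ∈ Ioc 1 n, (t : ℝ)⁻¹ := by
          gcongr
          grind
      _ ≤ Real.log n := by simpa using sum_Ioc_inv_le_log_div one_pos hn
  have sum_inv_sqrt : ∑ t ∈ Ico 2 n, (√(1 - (t : ℝ) / n))⁻¹ ≤ 2 * n := by
    refine le_trans ?_ (sum_range_inv_sqrt_one_sub_div_le n)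
    gcongr
    grind
  rw [one_div_mul_eq_div, div_le_iff₀' hn₀]
  calc _ ≤ ∑ t ∈ Ico 2 n, ((n : ℝ) / t + (√(1 - (t : ℝ) / n))⁻¹) := by
        refine sum_le_sum fun t ht ↦ ?_
        obtain ⟨h2t, htn⟩ := mem_Ico.1 ht
        exact div_sq_mul_rpow_sub_one_le (by positivity) (by exact_mod_cast htn)
    _ = n * ∑ t ∈ Ico 2 n, (t : ℝ)⁻¹ + ∑ t ∈ Ico 2 n, (√(1 - (t : ℝ) / n))⁻¹ := by
        simp only [sum_add_distrib, mul_sum, div_eq_mul_inv]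
    _ ≤ n * Real.log n + 2 * n := by gcongr
    _ = n * (Real.log n + 2) := by ring

theorem stmt19 : ∀ n : ℕ, 1 ≤ n →
    1 / (n : ℝ) * ∑ t ∈ Finset.Ico 2 n,
        ((n : ℝ) / t) ^ 2 * ((1 - (t : ℝ) / n) ^ (-(1 : ℝ) / 2) - 1)
      ≤ 3 * Real.log (Real.exp 1 * n) := by
  intro n hn
  have hn₁ : (1 : ℝ) ≤ n := by exact_mod_cast hn
  have hlog : 0 ≤ Real.log n := Real.log_nonneg hn₁
  have hlog_exp_mul : Real.log (Real.exp 1 * n) = 1 + Real.log n := by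
    rw [Real.log_mul (Real.exp_ne_zero 1) (by positivity), Real.log_exp]
  linarith [one_div_mul_sum_Ico_le_log_add_two hn]
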